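/- arXiv:2502.05357 — 5 statements merged into one kernel-verified Lean document; each statement's English description precedes it below -/
import Mathlib

section
/- Let n ≥ 1, let F : ℝⁿ → ℝⁿ be continuously differentiable, let A : ℝⁿ → ℝⁿ be an invertible linear map, let ρ ∈ (0,1), x ∈ ℝⁿ and r > 0, and suppose the Krawczyk condition holds at x with radius r for A and ρ. Then there exists a unique point x* in the closed box B(x,r) with F(x*) = 0, and moreover ‖x − x*‖ ≤ ρ·r. -/
/-!
The zeros of `F` are the fixed points of `g y = y - A (F y)`. Letting `u` and `-u` compete in the
Krawczyk condition gives `‖Dg z‖ ≤ ρ` on the box `B(x,r)`, so `g` is a contraction there.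
That `g` maps the box into `B(x,ρr)` needs the shift `g x - x` and the derivative to be kept
together: bounding them separately would only give `2ρr`. The mean value inequality along the
segment from `x` to `y`, applied to `t ↦ t • (g x - x) + g (x + t • (y - x))`, does so.
-/

open Set Metric Function
open scoped NNReal

theorem existsUnique_isFixedPt_of_lipschitzOnWith {α : Type*} [MetricSpace α] {K : ℝ≥0}
    {g : α → α} {s : Set α} (hK : K < 1) (hg : LipschitzOnWith K g s) (hs : IsComplete s)
    (hne : s.Nonempty) (hmaps : MapsTo g s s) :
    ∃ y ∈ s, IsFixedPt g y ∧ ∀ w ∈ s, IsFixedPt g w → w = y := by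
  have hcontr : ContractingWith K (hmaps.restrict g s s) := ⟨hK, hg.mapsToRestrict hmaps⟩
  obtain ⟨x, hx⟩ := hne
  obtain ⟨y, hy, hfix, -⟩ := hcontr.exists_fixedPoint' hs hmaps hx (edist_ne_top _ _)
  refine ⟨y, hy, hfix, fun w hw hwfix => ?_⟩
  have hsub : (⟨w, hw⟩ : s) = ⟨y, hy⟩ :=
    hcontr.fixedPoint_unique' (Subtype.ext hwfix) (Subtype.ext hfix)
  exact congrArg Subtype.val hsub

section NormedSpace

variable {E G : Type*} [NormedAddCommGroup E] [NormedSpace ℝ E]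
  [NormedAddCommGroup G] [NormedSpace ℝ G]

theorem norm_le_of_norm_add_le_of_norm_sub_le {a v : E} {C : ℝ}
    (hadd : ‖a + v‖ ≤ C) (hsub : ‖a - v‖ ≤ C) : ‖v‖ ≤ C := by
  have htwo : ‖(2 : ℝ) • v‖ ≤ C + C :=
    calc ‖(2 : ℝ) • v‖ = ‖(a + v) - (a - v)‖ := by congr 1; module
      _ ≤ C + C := norm_sub_le_of_le hadd hsub
  rw [norm_smul, Real.norm_two] at htwo
  linarith

theorem opNorm_le_div_of_norm_add_le {L : E →L[ℝ] G} {a : G} {r C : ℝ} (hr : 0 < r)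
    (h : ∀ v, ‖v‖ ≤ r → ‖a + L v‖ ≤ C) : ‖L‖ ≤ C / r := by
  have hC : 0 ≤ C := (norm_nonneg _).trans (h 0 (norm_zero.trans_le hr.le))
  refine ContinuousLinearMap.opNorm_le_of_unit_norm (div_nonneg hC hr.le) fun u hu => ?_
  have hru : ‖r • u‖ ≤ r := by rw [norm_smul, hu, mul_one, Real.norm_of_nonneg hr.le]
  have hsub : ‖a - L (r • u)‖ ≤ C := by
    simpa only [map_neg, ← sub_eq_add_neg] using h (-(r • u)) ((norm_neg _).trans_le hru)
  have hLru : ‖L (r • u)‖ ≤ C := norm_le_of_norm_add_le_of_norm_sub_le (h _ hru) hsub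
  rwa [map_smul, norm_smul, Real.norm_of_nonneg hr.le, ← le_div_iff₀' hr] at hLru

theorem norm_add_image_sub_le_of_norm_add_hasFDerivWithin_le {g : E → G} {g' : E → E →L[ℝ] G}
    {s : Set E} {x y : E} {a : G} {C : ℝ} (hs : Convex ℝ s)
    (hg : ∀ z ∈ s, HasFDerivWithinAt g (g' z) s z) (hx : x ∈ s) (hy : y ∈ s)
    (hbound : ∀ z ∈ s, ‖a + g' z (y - x)‖ ≤ C) : ‖a + (g y - g x)‖ ≤ C := by
  let γ : ℝ → E := AffineMap.lineMap x y
  have hγ : MapsTo γ (Icc 0 1) s := hs.mapsTo_lineMap hx hy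
  have hderiv : ∀ t ∈ Icc (0 : ℝ) 1, HasDerivWithinAt (fun t => t • a + g (γ t))
      (a + g' (γ t) (y - x)) (Icc 0 1) t := fun t ht => by
    have hlin : HasDerivWithinAt (fun t : ℝ => t • a) a (Icc 0 1) t := by
      simpa only [one_smul, id] using (hasDerivWithinAt_id t (Icc (0 : ℝ) 1)).smul_const a
    exact hlin.add
      ((hg _ (hγ ht)).comp_hasDerivWithinAt t AffineMap.hasDerivWithinAt_lineMap hγ)
  have hends : a + (g y - g x) = ((1 : ℝ) • a + g (γ 1)) - ((0 : ℝ) • a + g (γ 0)) := by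
    simp only [γ, AffineMap.lineMap_apply_one, AffineMap.lineMap_apply_zero, one_smul, zero_smul,
      zero_add, add_sub_assoc]
  rw [hends]
  exact norm_image_sub_le_of_norm_deriv_le_segment_01' hderiv
    fun t ht => hbound _ (hγ (Ico_subset_Icc_self ht))

theorem norm_image_sub_center_le {g : E → E} {g' : E → E →L[ℝ] E} {x y : E} {r C : ℝ}
    (hg : ∀ z ∈ closedBall x r, HasFDerivWithinAt g (g' z) (closedBall x r) z)
    (hbound : ∀ z ∈ closedBall x r, ∀ v, ‖v‖ ≤ r → ‖g x - x + g' z v‖ ≤ C)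
    (hy : y ∈ closedBall x r) : ‖g y - x‖ ≤ C := by
  have hx : x ∈ closedBall x r := mem_closedBall_self (nonempty_closedBall.1 ⟨y, hy⟩)
  have h : ‖g x - x + (g y - g x)‖ ≤ C :=
    norm_add_image_sub_le_of_norm_add_hasFDerivWithin_le (convex_closedBall x r) hg hx hy
      fun z hz => hbound z hz (y - x) (mem_closedBall_iff_norm.1 hy)
  rwa [add_comm, sub_add_sub_cancel] at h

theorem existsUnique_isFixedPt_of_norm_add_hasFDerivWithin_le [CompleteSpace E] {g : E → E}
    {g' : E → E →L[ℝ] E} {x : E} {r ρ : ℝ} (hr : 0 < r) (hρ : ρ < 1)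
    (hg : ∀ z ∈ closedBall x r, HasFDerivWithinAt g (g' z) (closedBall x r) z)
    (hbound : ∀ z ∈ closedBall x r, ∀ v, ‖v‖ ≤ r → ‖g x - x + g' z v‖ ≤ ρ * r) :
    ∃ y ∈ closedBall x r, IsFixedPt g y ∧ ‖x - y‖ ≤ ρ * r ∧
      ∀ w ∈ closedBall x r, IsFixedPt g w → w = y := by
  have hx : x ∈ closedBall x r := mem_closedBall_self hr.le
  have hderiv : ∀ z ∈ closedBall x r, ‖g' z‖ ≤ ρ := fun z hz => by
    simpa only [mul_div_cancel_right₀ ρ hr.ne'] using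
      opNorm_le_div_of_norm_add_le hr (hbound z hz)
  lift ρ to ℝ≥0 using (norm_nonneg _).trans (hderiv x hx)
  have hlip : LipschitzOnWith ρ g (closedBall x r) :=
    (convex_closedBall x r).lipschitzOnWith_of_nnnorm_hasFDerivWithin_le hg hderiv
  have hcenter : ∀ y ∈ closedBall x r, ‖g y - x‖ ≤ ρ * r := fun y hy =>
    norm_image_sub_center_le hg hbound hy
  have hmaps : MapsTo g (closedBall x r) (closedBall x r) := fun y hy =>
    mem_closedBall_iff_norm.2 ((hcenter y hy).trans (mul_le_of_le_one_left hr.le hρ.le))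
  obtain ⟨y, hy, hfix, huniq⟩ := existsUnique_isFixedPt_of_lipschitzOnWith hρ hlip
    isClosed_closedBall.isComplete ⟨x, hx⟩ hmaps
  refine ⟨y, hy, hfix, ?_, huniq⟩
  simpa only [hfix.eq, norm_sub_rev] using hcenter y hy

/-- The Krawczyk operator `y ↦ y - A (F y)` of `F` with preconditioner `A`. It turns zeros of `F`
into fixed points; `A` is meant to approximate the inverse of the derivative of `F`. -/
def krawczykMap (A : G →L[ℝ] E) (F : E → G) (y : E) : E :=
  y - A (F y)

theorem isFixedPt_krawczykMap_iff {A : G →L[ℝ] E} (hA : Injective A) {F : E → G} {y : E} :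
    IsFixedPt (krawczykMap A F) y ↔ F y = 0 := by
  rw [IsFixedPt, krawczykMap, sub_eq_self, map_eq_zero_iff A hA]

theorem hasFDerivWithinAt_krawczykMap (A : G →L[ℝ] E) {F : E → G} {F' : E →L[ℝ] G} {s : Set E}
    {z : E} (hF : HasFDerivWithinAt F F' s z) :
    HasFDerivWithinAt (krawczykMap A F) (.id ℝ E - A.comp F') s z :=
  (hasFDerivWithinAt_id z s).sub (A.hasFDerivAt.comp_hasFDerivWithinAt z hF)

theorem krawczyk_exists_unique_zero_general [CompleteSpace E] {F : E → G} {F' : E → E →L[ℝ] G}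
    {A : G →L[ℝ] E} (hA : Injective A) {ρ r : ℝ} (hρ : ρ < 1) (hr : 0 < r) {x : E}
    (hF : ∀ z ∈ closedBall x r, HasFDerivWithinAt F (F' z) (closedBall x r) z)
    (hK : ∀ z ∈ closedBall x r, ∀ u : E, ‖u‖ ≤ 1 →
      ‖-A (F x) + r • (u - A (F' z u))‖ ≤ ρ * r) :
    ∃ xs ∈ closedBall x r, F xs = 0 ∧ ‖x - xs‖ ≤ ρ * r ∧
      ∀ y ∈ closedBall x r, F y = 0 → y = xs := by
  have hbound : ∀ z ∈ closedBall x r, ∀ v, ‖v‖ ≤ r →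
      ‖krawczykMap A F x - x + (.id ℝ E - A.comp (F' z) : E →L[ℝ] E) v‖ ≤ ρ * r := by
    intro z hz v hv
    have hu : ‖r⁻¹ • v‖ ≤ 1 := by
      rwa [norm_smul, norm_inv, Real.norm_of_nonneg hr.le, inv_mul_le_one₀ hr]
    have hKv := hK z hz (r⁻¹ • v) hu
    rw [map_smul, map_smul, ← smul_sub, smul_inv_smul₀ hr.ne'] at hKv
    rwa [krawczykMap, sub_sub_cancel_left]
  simpa only [isFixedPt_krawczykMap_iff hA] using
    existsUnique_isFixedPt_of_norm_add_hasFDerivWithin_le hr hρ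
      (fun z hz => hasFDerivWithinAt_krawczykMap A (hF z hz)) hbound

end NormedSpace

/-- **Krawczyk existence-uniqueness theorem.**
If the Krawczyk condition holds at `x` with radius `r` for an invertible
linear map `A` and `ρ ∈ (0,1)`, then there is a unique zero `x*` of `F` in the
closed sup-norm ball `B(x,r)`, and `‖x − x*‖ ≤ ρ·r`. -/
theorem krawczyk_exists_unique_zero
    (n : ℕ) (hn : 1 ≤ n)
    (F : (Fin n → ℝ) → (Fin n → ℝ)) (hF : ContDiff ℝ 1 F)
    (A : (Fin n → ℝ) ≃L[ℝ] (Fin n → ℝ))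
    (ρ : ℝ) (hρ : ρ ∈ Set.Ioo (0 : ℝ) 1)
    (x : Fin n → ℝ) (r : ℝ) (hr : 0 < r)
    (hK : ∀ z ∈ Metric.closedBall x r, ∀ u : Fin n → ℝ, ‖u‖ ≤ 1 →
      ‖-A (F x) + r • (u - A ((fderiv ℝ F z) u))‖ ≤ ρ * r) :
    ∃ xs ∈ Metric.closedBall x r,
      F xs = 0 ∧ ‖x - xs‖ ≤ ρ * r ∧
      ∀ y ∈ Metric.closedBall x r, F y = 0 → y = xs := by
  exact krawczyk_exists_unique_zero_general (A := A.toContinuousLinearMap) A.injective hρ.2 hr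
    (fun z _ => (hF.differentiable one_ne_zero z).hasFDerivAt.hasFDerivWithinAt) hK
end

section
/- Let n ≥ 1, let F : ℝⁿ → ℝⁿ be continuously differentiable, let A : ℝⁿ → ℝⁿ be a linear map, let ρ ∈ (0,1), x ∈ ℝⁿ and r > 0, and suppose the Krawczyk condition holds at x with radius r for A and ρ. Then the quasi-Newton map g(y) = y − A(F(y)) maps the closed box B(x,r) into the closed box B(x, ρ·r); that is, ‖g(y) − x‖ ≤ ρ·r for every y ∈ B(x,r). -/
/-!
Let `g y = y - A (F y)`. The vector `g y - x` is `g x - x = -A (F x)` plus the average, along the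
segment from `x` to `y`, of `Dg z (y - x)`. Writing `y = x + r • u` with `‖u‖ ≤ 1`, it is therefore
an average of the vectors `-A (F x) + r • Dg z u`, whose norm is controlled by the Krawczyk
condition. In place of the average one uses the mean value inequality for
`t ↦ t • (g x - x) + g (x + t • (y - x))`, whose increment over `[0, 1]` is `g y - x`.
-/

open Set Metric

section MeanValue

variable {E G : Type*} [NormedAddCommGroup E] [NormedSpace ℝ E]
  [NormedAddCommGroup G] [NormedSpace ℝ G]
  {f : E → G} {f' : E → E →L[ℝ] G} {x y : E} {c : G} {r C : ℝ}

theorem norm_image_sub_le_of_norm_sub_add_fderiv_le_segment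
    (hf : ∀ z ∈ segment ℝ x y, HasFDerivWithinAt f (f' z) (segment ℝ x y) z)
    (bound : ∀ z ∈ segment ℝ x y, ‖(f x - c) + f' z (y - x)‖ ≤ C) :
    ‖f y - c‖ ≤ C := by
  let γ : ℝ → E := AffineMap.lineMap x y
  have hγ : MapsTo γ (Icc 0 1) (segment ℝ x y) := fun _ ht ↦ lineMap_mem_segment ℝ x y ht
  have hderiv : ∀ t ∈ Icc (0 : ℝ) 1, HasDerivWithinAt (fun t ↦ t • (f x - c) + f (γ t))
      ((f x - c) + f' (γ t) (y - x)) (Icc 0 1) t := fun t ht ↦ by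
    have hlin : HasDerivWithinAt (fun t : ℝ ↦ t • (f x - c)) (f x - c) (Icc 0 1) t := by
      simpa using (hasDerivWithinAt_id t _).smul_const (f x - c)
    exact hlin.add <|
      (hf _ (hγ ht)).comp_hasDerivWithinAt t AffineMap.hasDerivWithinAt_lineMap hγ
  have hmean := norm_image_sub_le_of_norm_deriv_le_segment_01' hderiv
    fun t ht ↦ bound _ (hγ (Ico_subset_Icc_self ht))
  have hdiff : (1 : ℝ) • (f x - c) + f (γ 1) - ((0 : ℝ) • (f x - c) + f (γ 0)) = f y - c := by
    simp only [γ, AffineMap.lineMap_apply_one, AffineMap.lineMap_apply_zero, one_smul, zero_smul]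
    abel
  exact hdiff ▸ hmean

theorem norm_image_sub_le_of_norm_sub_add_smul_fderiv_le_closedBall
    (hf : ∀ z ∈ closedBall x r, HasFDerivWithinAt f (f' z) (closedBall x r) z)
    (bound : ∀ z ∈ closedBall x r, ∀ u : E, ‖u‖ ≤ 1 → ‖(f x - c) + r • f' z u‖ ≤ C)
    (hy : y ∈ closedBall x r) : ‖f y - c‖ ≤ C := by
  have hr : 0 ≤ r := nonneg_of_mem_closedBall hy
  have hseg : segment ℝ x y ⊆ closedBall x r :=
    (convex_closedBall x r).segment_subset (mem_closedBall_self hr) hy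
  obtain ⟨u, hu, hyu⟩ : ∃ u : E, ‖u‖ ≤ 1 ∧ x + r • u = y := by
    simpa [← affinity_unitClosedBall hr, mem_vadd_set, mem_smul_set] using hy
  refine norm_image_sub_le_of_norm_sub_add_fderiv_le_segment
    (fun z hz ↦ (hf z (hseg hz)).mono hseg) fun z hz ↦ ?_
  have hdir : f' z (y - x) = r • f' z u := by
    rw [← hyu, add_sub_cancel_left, map_smul]
  exact hdir ▸ bound z (hseg hz) u hu

end MeanValue

section Krawczyk

variable {E G : Type*} [NormedAddCommGroup E] [NormedSpace ℝ E]
  [NormedAddCommGroup G] [NormedSpace ℝ G]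

/-- The quasi-Newton map of `F`, in which the fixed operator `A` replaces the inverse derivative
in Newton's method. -/
def quasiNewtonMap (A : G →L[ℝ] E) (F : E → G) (y : E) : E :=
  y - A (F y)

/-- The Krawczyk condition at `x` with radius `r`, for the preconditioner `A` and contraction
factor `ρ`. The derivative of `F` is passed as `F'`, so that `fderiv` and derivatives within the
ball are both covered. -/
def KrawczykCondition (A : G →L[ℝ] E) (F : E → G) (F' : E → E →L[ℝ] G) (ρ : ℝ) (x : E) (r : ℝ) :
    Prop :=
  ∀ z ∈ closedBall x r, ∀ u : E, ‖u‖ ≤ 1 → ‖-A (F x) + r • (u - A (F' z u))‖ ≤ ρ * r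

variable {A : G →L[ℝ] E} {F : E → G} {x : E}

theorem quasiNewtonMap_sub_self : quasiNewtonMap A F x - x = -A (F x) :=
  sub_sub_cancel_left x _

theorem hasFDerivWithinAt_quasiNewtonMap {L : E →L[ℝ] G} {s : Set E}
    (hF : HasFDerivWithinAt F L s x) :
    HasFDerivWithinAt (quasiNewtonMap A F) (.id ℝ E - A.comp L) s x :=
  (hasFDerivWithinAt_id x s).sub (A.hasFDerivAt.comp_hasFDerivWithinAt x hF)

theorem quasiNewton_maps_ball_into_smaller_ball_general {F' : E → E →L[ℝ] G} {ρ r : ℝ}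
    (hF : ∀ z ∈ closedBall x r, HasFDerivWithinAt F (F' z) (closedBall x r) z)
    (hK : KrawczykCondition A F F' ρ x r) :
    ∀ y ∈ closedBall x r, ‖quasiNewtonMap A F y - x‖ ≤ ρ * r := fun y hy ↦ by
  refine norm_image_sub_le_of_norm_sub_add_smul_fderiv_le_closedBall
    (fun z hz ↦ hasFDerivWithinAt_quasiNewtonMap (hF z hz)) (fun z hz u hu ↦ ?_) hy
  rw [quasiNewtonMap_sub_self]
  exact hK z hz u hu

end Krawczyk

/-- Under the Krawczyk condition, the quasi-Newton map `g(y) = y − A(F(y))`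
maps the closed box `B(x,r)` into the closed box `B(x, ρ·r)`. -/
theorem quasiNewton_maps_ball_into_smaller_ball
    (n : ℕ) (hn : 1 ≤ n)
    (F : (Fin n → ℝ) → (Fin n → ℝ)) (hF : ContDiff ℝ 1 F)
    (A : (Fin n → ℝ) →L[ℝ] (Fin n → ℝ))
    (ρ : ℝ) (hρ : ρ ∈ Set.Ioo (0 : ℝ) 1)
    (x : Fin n → ℝ) (r : ℝ) (hr : 0 < r)
    (hK : ∀ z ∈ Metric.closedBall x r, ∀ u : Fin n → ℝ, ‖u‖ ≤ 1 →
      ‖-A (F x) + r • (u - A ((fderiv ℝ F z) u))‖ ≤ ρ * r) :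
    ∀ y ∈ Metric.closedBall x r, ‖(y - A (F y)) - x‖ ≤ ρ * r :=
  quasiNewton_maps_ball_into_smaller_ball_general
    (fun z _ ↦ (hF.differentiable one_ne_zero z).hasFDerivAt.hasFDerivWithinAt) hK
end

section
/- Let γ₁, γ₂ : [0,1] → ℝ² be continuously differentiable curves, and let K₁, K₂ ⊆ ℝ² be closed convex cones such that γ₁'(t) ∈ K₁ and γ₂'(t) ∈ K₂ for every t ∈ [0,1]. Suppose that (K₁ ∪ (−K₁)) ∩ (K₂ ∪ (−K₂)) = {0}, i.e. no nonzero vector of K₁ is parallel to a vector of K₂. If s₁, s₂, t₁, t₂ ∈ [0,1] satisfy γ₁(s₁) = γ₂(t₁) and γ₁(s₂) = γ₂(t₂), then γ₁(s₁) = γ₁(s₂); in other words, the images of γ₁ and γ₂ share at most one point. -/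
open scoped Pointwise

/-!
A continuous linear functional bounded by `u` on `K` is, by the scalar mean value theorem, also
bounded by `u` at every difference quotient of a curve whose velocities lie in `K`. Since a closed
convex set is an intersection of closed half-spaces, it contains these difference quotients; if it
is moreover a cone, it contains the increments of the curve up to sign. Hence the difference of two
common points of the curves lies in both `K₁ ∪ -K₁` and `K₂ ∪ -K₂`, and therefore vanishes.
-/

open Set

theorem smul_mem_union_neg {R M : Type*} [Ring R] [LinearOrder R] [IsOrderedRing R]
    [AddCommGroup M] [Module R M] {K : Set M} (hcone : ∀ c : R, 0 ≤ c → ∀ w ∈ K, c • w ∈ K)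
    (c : R) {x : M} (hx : x ∈ K) : c • x ∈ K ∪ -K := by
  rcases le_total 0 c with hc | hc
  · exact .inl (hcone c hc x hx)
  · right
    rw [Set.mem_neg, ← neg_smul]
    exact hcone (-c) (neg_nonneg.2 hc) x hx

section Curve

variable {E : Type*} [NormedAddCommGroup E] [NormedSpace ℝ E] {γ γ' : ℝ → E} {I : Set ℝ}
  {K : Set E} {a b : ℝ}

theorem exists_map_slope_eq_map_of_hasDerivAt (f : StrongDual ℝ E) (hab : a < b)
    (hcont : ContinuousOn γ (Icc a b)) (hderiv : ∀ t ∈ Ioo a b, HasDerivAt γ (γ' t) t) :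
    ∃ c ∈ Ioo a b, f (γ' c) = f (slope γ a b) := by
  obtain ⟨c, hc, hslope⟩ := exists_hasDerivAt_eq_slope (f ∘ γ) (fun t ↦ f (γ' t)) hab
    (f.continuous.comp_continuousOn hcont)
    (fun t ht ↦ f.hasFDerivAt.comp_hasDerivAt t (hderiv t ht))
  refine ⟨c, hc, ?_⟩
  rw [hslope, slope_def_module, map_smul, map_sub, smul_eq_mul, inv_mul_eq_div,
    Function.comp_apply, Function.comp_apply]

theorem slope_mem_of_forall_hasDerivAt_mem (hclosed : IsClosed K) (hconvex : Convex ℝ K)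
    (hab : a < b) (hcont : ContinuousOn γ (Icc a b))
    (hderiv : ∀ t ∈ Ioo a b, HasDerivAt γ (γ' t) t) (hmem : ∀ t ∈ Ioo a b, γ' t ∈ K) :
    slope γ a b ∈ K := by
  by_contra hslope
  obtain ⟨f, u, hfK, hfslope⟩ := geometric_hahn_banach_closed_point hconvex hclosed hslope
  obtain ⟨c, hc, hfc⟩ := exists_map_slope_eq_map_of_hasDerivAt f hab hcont hderiv
  exact (hfK _ (hmem c hc)).not_gt (hfc ▸ hfslope)

theorem slope_mem_of_forall_hasDerivWithinAt_mem (hI : I.OrdConnected) (hclosed : IsClosed K)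
    (hconvex : Convex ℝ K) (hderiv : ∀ t ∈ I, HasDerivWithinAt γ (γ' t) I t)
    (hmem : ∀ t ∈ I, γ' t ∈ K) (ha : a ∈ I) (hb : b ∈ I) (hab : a ≠ b) :
    slope γ a b ∈ K := by
  wlog hlt : a < b generalizing a b
  · rw [slope_comm]
    exact this hb ha hab.symm (hab.lt_or_gt.resolve_left hlt)
  have hIcc : Icc a b ⊆ I := hI.out ha hb
  have hIoo : Ioo a b ⊆ I := Ioo_subset_Icc_self.trans hIcc
  exact slope_mem_of_forall_hasDerivAt_mem hclosed hconvex hlt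
    (fun t ht ↦ (hderiv t (hIcc ht)).continuousWithinAt.mono hIcc)
    (fun t ht ↦ (hderiv t (hIoo ht)).hasDerivAt
      (Filter.mem_of_superset (Ioo_mem_nhds ht.1 ht.2) hIoo))
    (fun t ht ↦ hmem t (hIoo ht))

theorem sub_mem_union_neg_of_forall_hasDerivWithinAt_mem (hI : I.OrdConnected)
    (hclosed : IsClosed K) (hconvex : Convex ℝ K)
    (hcone : ∀ c : ℝ, 0 ≤ c → ∀ w ∈ K, c • w ∈ K)
    (hderiv : ∀ t ∈ I, HasDerivWithinAt γ (γ' t) I t) (hmem : ∀ t ∈ I, γ' t ∈ K)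
    (ha : a ∈ I) (hb : b ∈ I) : γ b - γ a ∈ K ∪ -K := by
  rcases eq_or_ne a b with rfl | hab
  · simpa only [zero_smul, sub_self] using smul_mem_union_neg hcone 0 (hmem a ha)
  · rw [← vsub_eq_sub, ← sub_smul_slope]
    exact smul_mem_union_neg hcone (b - a)
      (slope_mem_of_forall_hasDerivWithinAt_mem hI hclosed hconvex hderiv hmem ha hb hab)

theorem transverse_cones_at_most_one_intersection_general {γ₁ γ₂ γ₁' γ₂' : ℝ → E} {I₁ I₂ : Set ℝ}
    (hI₁ : I₁.OrdConnected) (hI₂ : I₂.OrdConnected)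
    (hderiv₁ : ∀ t ∈ I₁, HasDerivWithinAt γ₁ (γ₁' t) I₁ t)
    (hderiv₂ : ∀ t ∈ I₂, HasDerivWithinAt γ₂ (γ₂' t) I₂ t)
    {K₁ K₂ : Set E} (hK₁closed : IsClosed K₁) (hK₁convex : Convex ℝ K₁)
    (hK₁cone : ∀ c : ℝ, 0 ≤ c → ∀ w ∈ K₁, c • w ∈ K₁)
    (hK₂closed : IsClosed K₂) (hK₂convex : Convex ℝ K₂)
    (hK₂cone : ∀ c : ℝ, 0 ≤ c → ∀ w ∈ K₂, c • w ∈ K₂)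
    (hmem₁ : ∀ t ∈ I₁, γ₁' t ∈ K₁) (hmem₂ : ∀ t ∈ I₂, γ₂' t ∈ K₂)
    (htrans : (K₁ ∪ -K₁) ∩ (K₂ ∪ -K₂) ⊆ {0}) :
    (γ₁ '' I₁ ∩ γ₂ '' I₂).Subsingleton := by
  rintro x ⟨⟨s₁, hs₁, hx₁⟩, ⟨t₁, ht₁, hx₂⟩⟩ y ⟨⟨s₂, hs₂, hy₁⟩, ⟨t₂, ht₂, hy₂⟩⟩
  have hsub₁ : x - y ∈ K₁ ∪ -K₁ := hx₁ ▸ hy₁ ▸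
    sub_mem_union_neg_of_forall_hasDerivWithinAt_mem hI₁ hK₁closed hK₁convex hK₁cone
      hderiv₁ hmem₁ hs₂ hs₁
  have hsub₂ : x - y ∈ K₂ ∪ -K₂ := hx₂ ▸ hy₂ ▸
    sub_mem_union_neg_of_forall_hasDerivWithinAt_mem hI₂ hK₂closed hK₂convex hK₂cone
      hderiv₂ hmem₂ ht₂ ht₁
  exact sub_eq_zero.1 (htrans ⟨hsub₁, hsub₂⟩)

end Curve

/-- If two C¹ planar curves have tangent vectors confined to closed convex
cones `K₁`, `K₂` with no nonzero parallel vectors in common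
(`(K₁ ∪ −K₁) ∩ (K₂ ∪ −K₂) = {0}`), then their images meet in at most one point. -/
theorem transverse_cones_at_most_one_intersection
    (γ₁ γ₂ γ₁' γ₂' : ℝ → EuclideanSpace ℝ (Fin 2))
    (hderiv₁ : ∀ t ∈ Set.Icc (0 : ℝ) 1,
      HasDerivWithinAt γ₁ (γ₁' t) (Set.Icc (0 : ℝ) 1) t)
    (hderiv₂ : ∀ t ∈ Set.Icc (0 : ℝ) 1,
      HasDerivWithinAt γ₂ (γ₂' t) (Set.Icc (0 : ℝ) 1) t)
    (hcont₁ : ContinuousOn γ₁' (Set.Icc (0 : ℝ) 1))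
    (hcont₂ : ContinuousOn γ₂' (Set.Icc (0 : ℝ) 1))
    (K₁ K₂ : Set (EuclideanSpace ℝ (Fin 2)))
    (hK₁closed : IsClosed K₁) (hK₁convex : Convex ℝ K₁)
    (hK₁cone : ∀ c : ℝ, 0 ≤ c → ∀ w ∈ K₁, c • w ∈ K₁)
    (hK₂closed : IsClosed K₂) (hK₂convex : Convex ℝ K₂)
    (hK₂cone : ∀ c : ℝ, 0 ≤ c → ∀ w ∈ K₂, c • w ∈ K₂)
    (hmem₁ : ∀ t ∈ Set.Icc (0 : ℝ) 1, γ₁' t ∈ K₁)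
    (hmem₂ : ∀ t ∈ Set.Icc (0 : ℝ) 1, γ₂' t ∈ K₂)
    (htrans : (K₁ ∪ -K₁) ∩ (K₂ ∪ -K₂) = {0})
    (s₁ s₂ t₁ t₂ : ℝ)
    (hs₁ : s₁ ∈ Set.Icc (0 : ℝ) 1) (hs₂ : s₂ ∈ Set.Icc (0 : ℝ) 1)
    (ht₁ : t₁ ∈ Set.Icc (0 : ℝ) 1) (ht₂ : t₂ ∈ Set.Icc (0 : ℝ) 1)
    (h₁ : γ₁ s₁ = γ₂ t₁) (h₂ : γ₁ s₂ = γ₂ t₂) :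
    γ₁ s₁ = γ₁ s₂ := by
  exact transverse_cones_at_most_one_intersection_general ordConnected_Icc ordConnected_Icc
    hderiv₁ hderiv₂ hK₁closed hK₁convex hK₁cone hK₂closed hK₂convex hK₂cone hmem₁ hmem₂
    htrans.subset
    ⟨⟨s₁, hs₁, rfl⟩, ⟨t₁, ht₁, h₁.symm⟩⟩ ⟨⟨s₂, hs₂, rfl⟩, ⟨t₂, ht₂, h₂.symm⟩⟩
end

section
/- Let γ₁, γ₂ : [0,1] → [0,1] × [0,1] be continuous paths in the closed unit square such that γ₁(0) lies on the left edge {0} × [0,1], γ₁(1) lies on the right edge {1} × [0,1], γ₂(0) lies on the bottom edge [0,1] × {0}, and γ₂(1) lies on the top edge [0,1] × {1}. Then there exist s, t ∈ [0,1] with γ₁(s) = γ₂(t); that is, the two paths must cross. -/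
/-!
The difference `γ₁ s - γ₂ t` is a continuous planar vector field on a square of parameters, and on
each edge one of its components has constant sign. If it never vanished, it would have a continuous
angle `θ`, which on each edge stays in a half-plane. Starting from the corner `(0, 0)`, where
`π / 2 ≤ θ ≤ π`, the bottom and right edges force `θ ≤ π / 2` at the corner `(1, 1)`, while the left
and top edges force `π ≤ θ` there.
-/

section Crossing

open Real

variable {X Y : Type*} [TopologicalSpace X] [TopologicalSpace Y]

theorem le_pi_of_forall_sin_nonneg [PreconnectedSpace X] {f : X → ℝ} (hf : Continuous f)
    (hsin : ∀ x, 0 ≤ sin (f x)) {a : X} (ha : f a ≤ π) (b : X) : f b ≤ π := by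
  by_contra! hb
  obtain ⟨x, hx⟩ : min (f b) (3 * π / 2) ∈ Set.range f :=
    mem_range_of_exists_le_of_exists_ge hf
      ⟨a, le_min (ha.trans hb.le) (by linarith [pi_pos])⟩ ⟨b, min_le_left _ _⟩
  have hpos : 0 < sin (f x - π) := by
    rw [hx]
    apply sin_pos_of_pos_of_lt_pi
    · exact sub_pos.2 (lt_min hb (by linarith [pi_pos]))
    · linarith [pi_pos, min_le_right (f b) (3 * π / 2)]
  rw [sin_sub_pi] at hpos
  linarith [hsin x]

theorem angle_le_pi_div_two_of_edges [PreconnectedSpace X] [PreconnectedSpace Y] {θ : X × Y → ℝ}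
    (hθ : Continuous θ) {x₀ x₁ : X} {y₀ : Y} (hbottom : ∀ x, 0 ≤ sin (θ (x, y₀)))
    (hright : ∀ y, 0 ≤ cos (θ (x₁, y))) (hcorner : θ (x₀, y₀) ≤ π) (y : Y) :
    θ (x₁, y) ≤ π / 2 := by
  have hle_pi : θ (x₁, y₀) ≤ π :=
    le_pi_of_forall_sin_nonneg (f := fun x ↦ θ (x, y₀)) (by fun_prop) hbottom hcorner x₁
  have hle_pi_div_two : θ (x₁, y₀) ≤ π / 2 := by
    by_contra! hlt
    exact (cos_neg_of_pi_div_two_lt_of_lt hlt (by linarith [pi_pos])).not_ge (hright y₀)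
  have hshift := le_pi_of_forall_sin_nonneg (f := fun y ↦ θ (x₁, y) + π / 2) (by fun_prop)
    (fun y ↦ by simpa only [sin_add_pi_div_two] using hright y) (a := y₀) (by linarith) y
  linarith

theorem pi_le_angle_of_edges [PreconnectedSpace X] [PreconnectedSpace Y] {θ : X × Y → ℝ}
    (hθ : Continuous θ) {x₀ : X} {y₀ y₁ : Y} (hleft : ∀ y, cos (θ (x₀, y)) ≤ 0)
    (htop : ∀ x, sin (θ (x, y₁)) ≤ 0) (hcorner : π / 2 ≤ θ (x₀, y₀)) (x : X) :
    π ≤ θ (x, y₁) := by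
  -- Reflecting the plane in the diagonal `re = -im` exchanges this with the previous lemma.
  have hsin (p : X × Y) : sin (π / 2 + π - θ p) = -cos (θ p) := by
    rw [add_sub_assoc, sin_add, sin_pi_sub, cos_pi_sub, sin_pi_div_two, cos_pi_div_two]
    ring
  have hcos (p : X × Y) : cos (π / 2 + π - θ p) = -sin (θ p) := by
    rw [add_sub_assoc, cos_add, sin_pi_sub, cos_pi_sub, sin_pi_div_two, cos_pi_div_two]
    ring
  have hreflected := angle_le_pi_div_two_of_edges (θ := fun p : Y × X ↦ π / 2 + π - θ p.swap)
    (x₀ := y₀) (x₁ := y₁) (y₀ := x₀) (by fun_prop) (fun y ↦ by simpa [hsin] using hleft y)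
    (fun x ↦ by simpa [hcos] using htop x) (by simp only [Prod.swap_prod_mk]; linarith) x
  simp only [Prod.swap_prod_mk] at hreflected
  linarith

theorem exists_continuous_arg_lift [SimplyConnectedSpace X] [LocallyPathConnectedSpace X]
    {F : X → ℂ} (hF : Continuous F) (hF₀ : ∀ x, F x ≠ 0) (x₀ : X) :
    ∃ θ : X → ℝ, Continuous θ ∧ θ x₀ = (F x₀).arg ∧ ∀ x, (θ x : Angle) = (F x).arg := by
  obtain ⟨L, ⟨hLx₀, hL⟩, -⟩ := Complex.isCoveringMapOn_exp.existsUnique_continuousMap_lifts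
    ⟨F, hF⟩ (Complex.exp_log (hF₀ x₀)) hF₀
  refine ⟨fun x ↦ (L x).im, by fun_prop, by simp [hLx₀, Complex.log_im], fun x ↦ ?_⟩
  have hexp : Complex.exp (L x) = F x := congrFun hL x
  rw [← hexp, Complex.arg_exp, Angle.coe_toIocMod]

theorem exists_eq_zero_of_edge_signs [ContractibleSpace X] [ContractibleSpace Y]
    [LocallyPathConnectedSpace X] [LocallyPathConnectedSpace Y] {F : X × Y → ℂ}
    (hF : Continuous F) {x₀ x₁ : X} {y₀ y₁ : Y}
    (hleft : ∀ y, (F (x₀, y)).re ≤ 0) (hright : ∀ y, 0 ≤ (F (x₁, y)).re)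
    (hbottom : ∀ x, 0 ≤ (F (x, y₀)).im) (htop : ∀ x, (F (x, y₁)).im ≤ 0) :
    ∃ p, F p = 0 := by
  by_contra! hF₀
  obtain ⟨θ, hθ, hcorner, harg⟩ := exists_continuous_arg_lift hF hF₀ (x₀, y₀)
  have hcos (p : X × Y) : cos (θ p) = (F p).re / ‖F p‖ := by
    rw [← Angle.cos_coe, harg, Angle.cos_coe, Complex.cos_arg (hF₀ p)]
  have hsin (p : X × Y) : sin (θ p) = (F p).im / ‖F p‖ := by
    rw [← Angle.sin_coe, harg, Angle.sin_coe, Complex.sin_arg]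
  have hcorner_le : θ (x₀, y₀) ≤ π := hcorner ▸ Complex.arg_le_pi _
  have hle_corner : π / 2 ≤ θ (x₀, y₀) := by
    rw [hcorner, ← not_lt, Complex.arg_lt_pi_div_two_iff]
    simp only [hF₀, or_false, not_or, not_lt]
    exact ⟨hleft y₀, hbottom x₀⟩
  have hle : θ (x₁, y₁) ≤ π / 2 := angle_le_pi_div_two_of_edges hθ
    (fun x ↦ hsin (x, y₀) ▸ div_nonneg (hbottom x) (norm_nonneg _))
    (fun y ↦ hcos (x₁, y) ▸ div_nonneg (hright y) (norm_nonneg _)) hcorner_le y₁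
  have hge : π ≤ θ (x₁, y₁) := pi_le_angle_of_edges hθ
    (fun y ↦ hcos (x₀, y) ▸ div_nonpos_of_nonpos_of_nonneg (hleft y) (norm_nonneg _))
    (fun x ↦ hsin (x, y₁) ▸ div_nonpos_of_nonpos_of_nonneg (htop x) (norm_nonneg _)) hle_corner x₁
  linarith [pi_pos]

theorem poincare_miranda_prod [PathConnectedSpace X] [PathConnectedSpace Y] {f g : X × Y → ℝ}
    (hf : Continuous f) (hg : Continuous g) {x₀ x₁ : X} {y₀ y₁ : Y}
    (hleft : ∀ y, f (x₀, y) ≤ 0) (hright : ∀ y, 0 ≤ f (x₁, y))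
    (hbottom : ∀ x, g (x, y₀) ≤ 0) (htop : ∀ x, 0 ≤ g (x, y₁)) :
    ∃ p, f p = 0 ∧ g p = 0 := by
  let α := PathConnectedSpace.somePath x₀ x₁
  let β := PathConnectedSpace.somePath y₀ y₁
  let square : ℝ × ℝ → X × Y := Prod.map α.extend β.extend
  have hsquare : Continuous square := α.continuous_extend.prodMap β.continuous_extend
  obtain ⟨p, hp⟩ := exists_eq_zero_of_edge_signs
    (F := fun p ↦ f (square p) - g (square p) * Complex.I) (by fun_prop)
    (x₀ := 0) (x₁ := 1) (y₀ := 0) (y₁ := 1)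
    (fun t ↦ by simpa [square] using hleft _) (fun t ↦ by simpa [square] using hright _)
    (fun s ↦ by simpa [square] using hbottom _) (fun s ↦ by simpa [square] using htop _)
  exact ⟨square p, by simpa using congrArg Complex.re hp, by simpa using congrArg Complex.im hp⟩

theorem paths_crossing_square_must_intersect_general [PathConnectedSpace X] [PathConnectedSpace Y]
    {γ₁ : X → ℝ × ℝ} {γ₂ : Y → ℝ × ℝ} (hcont₁ : Continuous γ₁) (hcont₂ : Continuous γ₂)
    {x₀ x₁ : X} {y₀ y₁ : Y}
    (hleft : ∀ y, (γ₁ x₀).1 ≤ (γ₂ y).1) (hright : ∀ y, (γ₂ y).1 ≤ (γ₁ x₁).1)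
    (hbottom : ∀ x, (γ₂ y₀).2 ≤ (γ₁ x).2) (htop : ∀ x, (γ₁ x).2 ≤ (γ₂ y₁).2) :
    ∃ x y, γ₁ x = γ₂ y := by
  obtain ⟨⟨x, y⟩, hfst, hsnd⟩ := poincare_miranda_prod
    (f := fun p ↦ (γ₁ p.1).1 - (γ₂ p.2).1) (g := fun p ↦ (γ₂ p.2).2 - (γ₁ p.1).2)
    (by fun_prop) (by fun_prop)
    (fun y ↦ sub_nonpos.2 (hleft y)) (fun y ↦ sub_nonneg.2 (hright y))
    (fun x ↦ sub_nonpos.2 (hbottom x)) (fun x ↦ sub_nonneg.2 (htop x))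
  exact ⟨x, y, Prod.ext (sub_eq_zero.1 hfst) (sub_eq_zero.1 hsnd).symm⟩

end Crossing

/-- **Crossing lemma.** A continuous path crossing the closed unit square from
the left edge to the right edge must intersect any continuous path crossing it
from the bottom edge to the top edge. -/
theorem paths_crossing_square_must_intersect
    (γ₁ γ₂ : ℝ → ℝ × ℝ)
    (hcont₁ : ContinuousOn γ₁ (Set.Icc (0 : ℝ) 1))
    (hcont₂ : ContinuousOn γ₂ (Set.Icc (0 : ℝ) 1))
    (hmaps₁ : ∀ t ∈ Set.Icc (0 : ℝ) 1,
      γ₁ t ∈ Set.Icc (0 : ℝ) 1 ×ˢ Set.Icc (0 : ℝ) 1)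
    (hmaps₂ : ∀ t ∈ Set.Icc (0 : ℝ) 1,
      γ₂ t ∈ Set.Icc (0 : ℝ) 1 ×ˢ Set.Icc (0 : ℝ) 1)
    (hleft : (γ₁ 0).1 = 0) (hright : (γ₁ 1).1 = 1)
    (hbottom : (γ₂ 0).2 = 0) (htop : (γ₂ 1).2 = 1) :
    ∃ s ∈ Set.Icc (0 : ℝ) 1, ∃ t ∈ Set.Icc (0 : ℝ) 1, γ₁ s = γ₂ t := by
  have : PathConnectedSpace (Set.Icc (0 : ℝ) 1) := isPathConnected_iff_pathConnectedSpace.1 <|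
    (convex_Icc 0 1).isPathConnected (Set.nonempty_Icc.2 zero_le_one)
  obtain ⟨s, t, hst⟩ := paths_crossing_square_must_intersect_general
    hcont₁.domRestrict hcont₂.domRestrict (x₀ := 0) (x₁ := 1) (y₀ := 0) (y₁ := 1)
    (fun t ↦ hleft.trans_le (hmaps₂ t t.2).1.1) (fun t ↦ (hmaps₂ t t.2).1.2.trans_eq hright.symm)
    (fun s ↦ hbottom.trans_le (hmaps₁ s s.2).2.1) (fun s ↦ (hmaps₁ s s.2).2.2.trans_eq htop.symm)
  exact ⟨s, s.2, t, t.2, hst⟩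
end

section
/- Let γ₁, γ₂ : [0,1] → ℝ² be continuously differentiable paths whose images lie in the closed unit square [0,1] × [0,1], with γ₁(0) on the left edge {0} × [0,1], γ₁(1) on the right edge {1} × [0,1], γ₂(0) on the bottom edge [0,1] × {0}, and γ₂(1) on the top edge [0,1] × {1}. Suppose moreover that there are closed convex cones K₁, K₂ ⊆ ℝ² with γ₁'(t) ∈ K₁ and γ₂'(t) ∈ K₂ for all t ∈ [0,1] and (K₁ ∪ (−K₁)) ∩ (K₂ ∪ (−K₂)) = {0}. Then there is exactly one point p ∈ ℝ² lying on both curves, i.e. the intersection of the images of γ₁ and γ₂ is a singleton. -/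
open scoped Pointwise

/-!
For existence, suppose the curves are disjoint. Then `γ₁ s - γ₂ t` is a nowhere vanishing function
of `(s, t)`, so it has a continuous argument `θ` on the whole parameter square. Along each side of
the square one coordinate of `γ₁ s - γ₂ t` has constant sign, so `θ` stays in a half-turn there.
From one side to the next this half-turn moves down by a quarter-turn, so after going once around
the boundary `θ` would come back with a strictly smaller value than it started with.

For uniqueness, a chord of a curve with velocities in a closed convex cone lies, up to sign, in
that cone. Two common points of the curves would give a chord common to both.
-/

open Set Real

section Crossing

variable {X Y : Type*} [TopologicalSpace X] [TopologicalSpace Y]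

lemma nonneg_of_sin_comp_nonneg [PreconnectedSpace X] {φ : X → ℝ} (hφ : Continuous φ)
    (hsin : ∀ x, 0 ≤ sin (φ x)) {a b : X} (ha : 0 ≤ φ a) : 0 ≤ φ b := by
  by_contra! hb
  obtain ⟨x, hx⟩ : max (φ b) (-(π / 2)) ∈ range φ :=
    intermediate_value_univ b a hφ
      ⟨le_max_left _ _, max_le (hb.le.trans ha) (by linarith [pi_pos])⟩
  have hneg : sin (φ x) < 0 := by
    rw [hx]
    exact sin_neg_of_neg_of_neg_pi_lt (max_lt hb (by linarith [pi_pos]))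
      (lt_max_of_lt_right (by linarith [pi_pos]))
  exact (hsin x).not_gt hneg

lemma mem_Icc_zero_pi_of_sin_comp_nonneg [PreconnectedSpace X] {φ : X → ℝ} (hφ : Continuous φ)
    (hsin : ∀ x, 0 ≤ sin (φ x)) {a b : X} (ha : φ a ∈ Icc 0 π) : φ b ∈ Icc 0 π := by
  refine ⟨nonneg_of_sin_comp_nonneg hφ hsin ha.1, sub_nonneg.1 ?_⟩
  exact nonneg_of_sin_comp_nonneg (φ := fun x ↦ π - φ x) (by fun_prop)
    (fun x ↦ (sin_pi_sub (φ x)).symm ▸ hsin x) (sub_nonneg.2 ha.2)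

lemma add_pi_div_two_mem_Icc_of_sin_comp_nonneg [PreconnectedSpace X] {φ : X → ℝ}
    (hφ : Continuous φ) (hsin : ∀ x, 0 ≤ sin (φ x)) {a b : X} (ha : φ a ∈ Icc 0 π)
    (hb : 0 ≤ cos (φ b)) : φ b + π / 2 ∈ Icc 0 π := by
  obtain ⟨hb₀, hbπ⟩ := mem_Icc_zero_pi_of_sin_comp_nonneg hφ hsin ha (b := b)
  have hb_le : φ b ≤ π / 2 := by
    by_contra! h
    exact hb.not_gt (cos_neg_of_pi_div_two_lt_of_lt h (by linarith [pi_pos]))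
  constructor <;> linarith [pi_pos]

/- The sides of the rectangle are traversed in the order bottom, right, top, left. On each of them
the previous lemma applies to `θ` increased by one more quarter-turn. -/
lemma notMem_Icc_of_cos_sin_signs [PreconnectedSpace X] [PreconnectedSpace Y] {θ : X × Y → ℝ}
    (hθ : Continuous θ) {x₀ x₁ : X} {y₀ y₁ : Y}
    (hleft : ∀ y, cos (θ (x₀, y)) ≤ 0) (hright : ∀ y, 0 ≤ cos (θ (x₁, y)))
    (hbottom : ∀ x, 0 ≤ sin (θ (x, y₀))) (htop : ∀ x, sin (θ (x, y₁)) ≤ 0) :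
    θ (x₀, y₀) ∉ Icc 0 π := by
  intro h₀₀
  have h₁₀ : θ (x₁, y₀) + π / 2 ∈ Icc 0 π :=
    add_pi_div_two_mem_Icc_of_sin_comp_nonneg (φ := fun x ↦ θ (x, y₀)) (by fun_prop)
      hbottom h₀₀ (hright y₀)
  have h₁₁ : θ (x₁, y₁) + π / 2 + π / 2 ∈ Icc 0 π :=
    add_pi_div_two_mem_Icc_of_sin_comp_nonneg (φ := fun y ↦ θ (x₁, y) + π / 2) (by fun_prop)
      (by simpa [sin_add_pi_div_two] using hright) h₁₀
      (by simpa [cos_add_pi_div_two] using htop x₁)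
  have h₀₁ : θ (x₀, y₁) + π / 2 + π / 2 + π / 2 ∈ Icc 0 π :=
    add_pi_div_two_mem_Icc_of_sin_comp_nonneg (φ := fun x ↦ θ (x, y₁) + π / 2 + π / 2)
      (by fun_prop) (by simpa [sin_add_pi_div_two, cos_add_pi_div_two] using htop) h₁₁
      (by simpa [sin_add_pi_div_two, cos_add_pi_div_two] using hleft y₁)
  have h₀₀' : θ (x₀, y₀) + π / 2 + π / 2 + π / 2 + π / 2 ∈ Icc 0 π :=
    add_pi_div_two_mem_Icc_of_sin_comp_nonneg (φ := fun y ↦ θ (x₀, y) + π / 2 + π / 2 + π / 2)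
      (by fun_prop) (by simpa [sin_add_pi_div_two, cos_add_pi_div_two] using hleft) h₀₁
      (by simpa [sin_add_pi_div_two, cos_add_pi_div_two] using hbottom x₀)
  linarith [h₀₀.1, h₀₀'.2, pi_pos]

lemma exists_continuous_arg [SimplyConnectedSpace X] [LocallyPathConnectedSpace X] {f : X → ℂ}
    (hf : Continuous f) (hf₀ : ∀ x, f x ≠ 0) (x₀ : X) :
    ∃ θ : X → ℝ, Continuous θ ∧ θ x₀ = (f x₀).arg ∧ ∀ x, (θ x : Angle) = (f x).arg := by
  obtain ⟨g, ⟨hg₀, hg⟩, -⟩ := Complex.isCoveringMapOn_exp.existsUnique_continuousMap_lifts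
    ⟨f, hf⟩ (Complex.exp_log (hf₀ x₀)) hf₀
  have hexp (x : X) : Complex.exp (g x) = f x := congrFun hg x
  refine ⟨fun x ↦ (g x).im, by fun_prop, ?_, fun x ↦ ?_⟩
  · simp only [hg₀, ContinuousMap.coe_mk, Complex.log_im]
  · rw [← hexp, Complex.arg_exp, Angle.coe_toIocMod]

lemma exists_eq_zero_of_re_im_signs [PreconnectedSpace X] [PreconnectedSpace Y]
    [SimplyConnectedSpace (X × Y)] [LocallyPathConnectedSpace (X × Y)] {f : X × Y → ℂ}
    (hf : Continuous f) {x₀ x₁ : X} {y₀ y₁ : Y}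
    (hleft : ∀ y, (f (x₀, y)).re ≤ 0) (hright : ∀ y, 0 ≤ (f (x₁, y)).re)
    (hbottom : ∀ x, 0 ≤ (f (x, y₀)).im) (htop : ∀ x, (f (x, y₁)).im ≤ 0) :
    ∃ z, f z = 0 := by
  by_contra! hf₀
  obtain ⟨θ, hθ, hθ₀, hθ_arg⟩ := exists_continuous_arg hf hf₀ (x₀, y₀)
  have hcos (z : X × Y) : cos (θ z) = (f z).re / ‖f z‖ := by
    rw [← Angle.cos_coe, hθ_arg, Angle.cos_coe, Complex.cos_arg (hf₀ z)]
  have hsin (z : X × Y) : sin (θ z) = (f z).im / ‖f z‖ := by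
    rw [← Angle.sin_coe, hθ_arg, Angle.sin_coe, Complex.sin_arg]
  have hcorner : θ (x₀, y₀) ∈ Icc 0 π :=
    hθ₀ ▸ ⟨Complex.arg_nonneg_iff.2 (hbottom x₀), Complex.arg_le_pi _⟩
  exact notMem_Icc_of_cos_sin_signs hθ
    (fun y ↦ hcos _ ▸ div_nonpos_of_nonpos_of_nonneg (hleft y) (norm_nonneg _))
    (fun y ↦ hcos _ ▸ div_nonneg (hright y) (norm_nonneg _))
    (fun x ↦ hsin _ ▸ div_nonneg (hbottom x) (norm_nonneg _))
    (fun x ↦ hsin _ ▸ div_nonpos_of_nonpos_of_nonneg (htop x) (norm_nonneg _)) hcorner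

/-- The two-dimensional Poincaré–Miranda theorem, with path-connected spaces instead of
intervals. -/
theorem exists_eq_zero_of_sign_changes [PathConnectedSpace X] [PathConnectedSpace Y]
    {u v : X × Y → ℝ} (hu : Continuous u) (hv : Continuous v) {x₀ x₁ : X} {y₀ y₁ : Y}
    (hleft : ∀ y, u (x₀, y) ≤ 0) (hright : ∀ y, 0 ≤ u (x₁, y))
    (hbottom : ∀ x, v (x, y₀) ≤ 0) (htop : ∀ x, 0 ≤ v (x, y₁)) :
    ∃ z, u z = 0 ∧ v z = 0 := by
  let p := (PathConnectedSpace.somePath x₀ x₁).extend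
  let q := (PathConnectedSpace.somePath y₀ y₁).extend
  have hp₀ : p 0 = x₀ := Path.extend_zero _
  have hp₁ : p 1 = x₁ := Path.extend_one _
  have hq₀ : q 0 = y₀ := Path.extend_zero _
  have hq₁ : q 1 = y₁ := Path.extend_one _
  let f : ℝ × ℝ → ℂ :=
    fun z ↦ Complex.equivRealProdCLM.symm (u (p z.1, q z.2), -v (p z.1, q z.2))
  obtain ⟨z, hz⟩ : ∃ z, f z = 0 :=
    exists_eq_zero_of_re_im_signs (x₀ := 0) (x₁ := 1) (y₀ := 0) (y₁ := 1) (by fun_prop)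
      (fun t ↦ by simpa [f, hp₀] using hleft (q t)) (fun t ↦ by simpa [f, hp₁] using hright (q t))
      (fun s ↦ by simpa [f, hq₀] using hbottom (p s)) (fun s ↦ by simpa [f, hq₁] using htop (p s))
  have huv := (map_eq_zero_iff _ Complex.equivRealProdCLM.symm.injective).1 hz
  exact ⟨(p z.1, q z.2), congrArg Prod.fst huv, neg_eq_zero.1 (congrArg Prod.snd huv)⟩

lemma exists_eq_of_crossing [PathConnectedSpace X] [PathConnectedSpace Y]
    {γ₁ : X → ℝ × ℝ} {γ₂ : Y → ℝ × ℝ} (hγ₁ : Continuous γ₁) (hγ₂ : Continuous γ₂)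
    {x₀ x₁ : X} {y₀ y₁ : Y}
    (hleft : ∀ y, (γ₁ x₀).1 ≤ (γ₂ y).1) (hright : ∀ y, (γ₂ y).1 ≤ (γ₁ x₁).1)
    (hbottom : ∀ x, (γ₂ y₀).2 ≤ (γ₁ x).2) (htop : ∀ x, (γ₁ x).2 ≤ (γ₂ y₁).2) :
    ∃ x y, γ₁ x = γ₂ y := by
  obtain ⟨⟨x, y⟩, hfst, hsnd⟩ := exists_eq_zero_of_sign_changes
    (u := fun z : X × Y ↦ (γ₁ z.1).1 - (γ₂ z.2).1)
    (v := fun z : X × Y ↦ (γ₂ z.2).2 - (γ₁ z.1).2) (by fun_prop) (by fun_prop)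
    (fun y ↦ sub_nonpos.2 (hleft y)) (fun y ↦ sub_nonneg.2 (hright y))
    (fun x ↦ sub_nonpos.2 (hbottom x)) (fun x ↦ sub_nonneg.2 (htop x))
  exact ⟨x, y, Prod.ext (sub_eq_zero.1 hfst) (sub_eq_zero.1 hsnd).symm⟩

end Crossing

section Chords

variable {E : Type*} [NormedAddCommGroup E] [NormedSpace ℝ E] {γ γ' : ℝ → E} {K : Set E}

lemma slope_mem_of_hasDerivAt_mem {a b : ℝ} (hab : a < b) (hγ : ContinuousOn γ (Icc a b))
    (hderiv : ∀ t ∈ Ioo a b, HasDerivAt γ (γ' t) t) (hKclosed : IsClosed K)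
    (hKconvex : Convex ℝ K) (hmem : ∀ t ∈ Ioo a b, γ' t ∈ K) : slope γ a b ∈ K := by
  by_contra hslope
  obtain ⟨f, c, hfK, hf⟩ := geometric_hahn_banach_closed_point hKconvex hKclosed hslope
  obtain ⟨t, ht, hft⟩ : ∃ t ∈ Ioo a b, f (γ' t) = (f (γ b) - f (γ a)) / (b - a) :=
    exists_hasDerivAt_eq_slope (f ∘ γ) (f ∘ γ') hab (f.continuous.comp_continuousOn hγ)
      fun t ht ↦ f.hasFDerivAt.comp_hasDerivAt t (hderiv t ht)
  have hf_slope : f (slope γ a b) = f (γ' t) := by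
    rw [hft, slope_def_module, map_smul, map_sub, smul_eq_mul, inv_mul_eq_div]
  exact lt_asymm (hfK _ (hmem t ht)) (hf_slope ▸ hf)

variable {I : Set ℝ}

lemma sub_mem_of_hasDerivWithinAt_mem_cone (hI : I.OrdConnected)
    (hderiv : ∀ t ∈ I, HasDerivWithinAt γ (γ' t) I t) (hKclosed : IsClosed K)
    (hKconvex : Convex ℝ K) (hKcone : ∀ c : ℝ, 0 ≤ c → ∀ w ∈ K, c • w ∈ K)
    (hmem : ∀ t ∈ I, γ' t ∈ K) {a b : ℝ} (ha : a ∈ I) (hb : b ∈ I) (hab : a ≤ b) :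
    γ b - γ a ∈ K := by
  obtain rfl | hlt := hab.eq_or_lt
  · simpa using hKcone 0 le_rfl _ (hmem a ha)
  have hsub : Icc a b ⊆ I := hI.out ha hb
  have hslope : slope γ a b ∈ K :=
    slope_mem_of_hasDerivAt_mem hlt
      (fun t ht ↦ (hderiv t (hsub ht)).continuousWithinAt.mono hsub)
      (fun t ht ↦ ((hderiv t (hsub (Ioo_subset_Icc_self ht))).mono hsub).hasDerivAt
        (Icc_mem_nhds ht.1 ht.2))
      hKclosed hKconvex fun t ht ↦ hmem t (hsub (Ioo_subset_Icc_self ht))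
  simpa only [sub_smul_slope, vsub_eq_sub] using hKcone (b - a) (sub_nonneg.2 hab) _ hslope

lemma sub_mem_union_neg_of_hasDerivWithinAt_mem_cone (hI : I.OrdConnected)
    (hderiv : ∀ t ∈ I, HasDerivWithinAt γ (γ' t) I t) (hKclosed : IsClosed K)
    (hKconvex : Convex ℝ K) (hKcone : ∀ c : ℝ, 0 ≤ c → ∀ w ∈ K, c • w ∈ K)
    (hmem : ∀ t ∈ I, γ' t ∈ K) {v w : E} (hv : v ∈ γ '' I) (hw : w ∈ γ '' I) :
    v - w ∈ K ∪ -K := by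
  obtain ⟨s, hs, rfl⟩ := hv
  obtain ⟨t, ht, rfl⟩ := hw
  have hchord {a b : ℝ} (ha : a ∈ I) (hb : b ∈ I) (hab : a ≤ b) : γ b - γ a ∈ K :=
    sub_mem_of_hasDerivWithinAt_mem_cone hI hderiv hKclosed hKconvex hKcone hmem ha hb hab
  obtain hts | hst := le_total t s
  · exact .inl (hchord ht hs hts)
  · exact .inr (mem_neg.2 ((neg_sub (γ s) (γ t)).symm ▸ hchord hs ht hst))

end Chords

theorem transverse_paths_crossing_square_unique_intersection_general
    {γ₁ γ₂ γ₁' γ₂' : ℝ → ℝ × ℝ}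
    (hderiv₁ : ∀ t ∈ Icc (0 : ℝ) 1, HasDerivWithinAt γ₁ (γ₁' t) (Icc (0 : ℝ) 1) t)
    (hderiv₂ : ∀ t ∈ Icc (0 : ℝ) 1, HasDerivWithinAt γ₂ (γ₂' t) (Icc (0 : ℝ) 1) t)
    (hleft : ∀ t ∈ Icc (0 : ℝ) 1, (γ₁ 0).1 ≤ (γ₂ t).1)
    (hright : ∀ t ∈ Icc (0 : ℝ) 1, (γ₂ t).1 ≤ (γ₁ 1).1)
    (hbottom : ∀ t ∈ Icc (0 : ℝ) 1, (γ₂ 0).2 ≤ (γ₁ t).2)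
    (htop : ∀ t ∈ Icc (0 : ℝ) 1, (γ₁ t).2 ≤ (γ₂ 1).2)
    {K₁ K₂ : Set (ℝ × ℝ)}
    (hK₁closed : IsClosed K₁) (hK₁convex : Convex ℝ K₁)
    (hK₁cone : ∀ c : ℝ, 0 ≤ c → ∀ w ∈ K₁, c • w ∈ K₁)
    (hK₂closed : IsClosed K₂) (hK₂convex : Convex ℝ K₂)
    (hK₂cone : ∀ c : ℝ, 0 ≤ c → ∀ w ∈ K₂, c • w ∈ K₂)
    (hmem₁ : ∀ t ∈ Icc (0 : ℝ) 1, γ₁' t ∈ K₁) (hmem₂ : ∀ t ∈ Icc (0 : ℝ) 1, γ₂' t ∈ K₂)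
    (htrans : (K₁ ∪ -K₁) ∩ (K₂ ∪ -K₂) = {0}) :
    ∃ p : ℝ × ℝ, (γ₁ '' Icc (0 : ℝ) 1) ∩ (γ₂ '' Icc (0 : ℝ) 1) = {p} := by
  have hcont₁ : ContinuousOn γ₁ (Icc 0 1) := fun t ht ↦ (hderiv₁ t ht).continuousWithinAt
  have hcont₂ : ContinuousOn γ₂ (Icc 0 1) := fun t ht ↦ (hderiv₂ t ht).continuousWithinAt
  have : PathConnectedSpace unitInterval :=
    isPathConnected_iff_pathConnectedSpace.1 ((convex_Icc 0 1).isPathConnected ⟨0, by simp⟩)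
  obtain ⟨s, t, hst⟩ := exists_eq_of_crossing (x₀ := (0 : unitInterval)) (x₁ := 1)
    (y₀ := (0 : unitInterval)) (y₁ := 1) hcont₁.domRestrict hcont₂.domRestrict
    (fun t ↦ hleft t t.2) (fun t ↦ hright t t.2) (fun s ↦ hbottom s s.2) (fun s ↦ htop s s.2)
  refine exists_eq_singleton_iff_nonempty_subsingleton.2
    ⟨⟨γ₁ s, mem_image_of_mem γ₁ s.2, t, t.2, hst.symm⟩, ?_⟩
  rintro v ⟨hv₁, hv₂⟩ w ⟨hw₁, hw₂⟩
  have hchord₁ : v - w ∈ K₁ ∪ -K₁ := sub_mem_union_neg_of_hasDerivWithinAt_mem_cone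
    ordConnected_Icc hderiv₁ hK₁closed hK₁convex hK₁cone hmem₁ hv₁ hw₁
  have hchord₂ : v - w ∈ K₂ ∪ -K₂ := sub_mem_union_neg_of_hasDerivWithinAt_mem_cone
    ordConnected_Icc hderiv₂ hK₂closed hK₂convex hK₂cone hmem₂ hv₂ hw₂
  exact sub_eq_zero.1 (htrans.subset ⟨hchord₁, hchord₂⟩)

/-- A C¹ path crossing the unit square left-to-right and a C¹ path crossing it
bottom-to-top, whose tangent vectors lie in closed convex cones with no nonzero
parallel vectors in common, intersect in exactly one point. -/
theorem transverse_paths_crossing_square_unique_intersection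
    (γ₁ γ₂ γ₁' γ₂' : ℝ → ℝ × ℝ)
    (hderiv₁ : ∀ t ∈ Set.Icc (0 : ℝ) 1,
      HasDerivWithinAt γ₁ (γ₁' t) (Set.Icc (0 : ℝ) 1) t)
    (hderiv₂ : ∀ t ∈ Set.Icc (0 : ℝ) 1,
      HasDerivWithinAt γ₂ (γ₂' t) (Set.Icc (0 : ℝ) 1) t)
    (hcont₁ : ContinuousOn γ₁' (Set.Icc (0 : ℝ) 1))
    (hcont₂ : ContinuousOn γ₂' (Set.Icc (0 : ℝ) 1))
    (hmaps₁ : ∀ t ∈ Set.Icc (0 : ℝ) 1,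
      γ₁ t ∈ Set.Icc (0 : ℝ) 1 ×ˢ Set.Icc (0 : ℝ) 1)
    (hmaps₂ : ∀ t ∈ Set.Icc (0 : ℝ) 1,
      γ₂ t ∈ Set.Icc (0 : ℝ) 1 ×ˢ Set.Icc (0 : ℝ) 1)
    (hleft : (γ₁ 0).1 = 0) (hright : (γ₁ 1).1 = 1)
    (hbottom : (γ₂ 0).2 = 0) (htop : (γ₂ 1).2 = 1)
    (K₁ K₂ : Set (ℝ × ℝ))
    (hK₁closed : IsClosed K₁) (hK₁convex : Convex ℝ K₁)
    (hK₁cone : ∀ c : ℝ, 0 ≤ c → ∀ w ∈ K₁, c • w ∈ K₁)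
    (hK₂closed : IsClosed K₂) (hK₂convex : Convex ℝ K₂)
    (hK₂cone : ∀ c : ℝ, 0 ≤ c → ∀ w ∈ K₂, c • w ∈ K₂)
    (hmem₁ : ∀ t ∈ Set.Icc (0 : ℝ) 1, γ₁' t ∈ K₁)
    (hmem₂ : ∀ t ∈ Set.Icc (0 : ℝ) 1, γ₂' t ∈ K₂)
    (htrans : (K₁ ∪ -K₁) ∩ (K₂ ∪ -K₂) = {0}) :
    ∃ p : ℝ × ℝ,
      (γ₁ '' Set.Icc (0 : ℝ) 1) ∩ (γ₂ '' Set.Icc (0 : ℝ) 1) = {p} := by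
  exact transverse_paths_crossing_square_unique_intersection_general hderiv₁ hderiv₂
    (fun t ht ↦ hleft.trans_le (hmaps₂ t ht).1.1)
    (fun t ht ↦ (hmaps₂ t ht).1.2.trans_eq hright.symm)
    (fun t ht ↦ hbottom.trans_le (hmaps₁ t ht).2.1)
    (fun t ht ↦ (hmaps₁ t ht).2.2.trans_eq htop.symm)
    hK₁closed hK₁convex hK₁cone hK₂closed hK₂convex hK₂cone hmem₁ hmem₂ htrans
end
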